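/- For every Ω ∈ 𝔖₂ and every z ∈ ℂ², the following three quadratic theta relations hold (equations (E13)–(E15)): A7²·X2² − A8²·X3² + A2²·X4² − A1²·X5² = 0, A9²·X2² − A4²·X3² − A5²·X4² + A1²·X6² = 0, and A6²·X2² − A3²·X3² − A5²·X5² + A2²·X6² = 0. -/

import Mathlib

/-! The squares of theta functions are bilinear in second-order theta functions. Writing a pair of
lattice points as `n = p + q + s`, `m = p - q` with `s ∈ {0, 1}²` turns the double series of
`θ[a; b](z, Ω)²` into
`∑ₛ θ[a + s/2; 2b](2z, 2Ω) · θ[s/2; 0](0, 2Ω)` (`theta2_sq`).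
For half-integral `a`, `b`, translating the characteristics by integers only produces signs
(`theta2_add_int`), so with `T_u = θ[u/2; 0](2z, 2Ω)` and `t_u = T_u(0)`
`θ[α/2; β/2](z, Ω)² = ∑ₛ (-1)^((α + s)·β) T_{α+s} t_s` (`theta2_half_sq`).
Substituting this in each relation gives a polynomial in the four `T_u` and the four `t_u` that
vanishes identically.

The rearrangement is legitimate because the series converge absolutely: the imaginary part of `Ω`
dominates a positive multiple of the identity, which bounds the series by a product of two
one-variable theta series (`summable_theta2Term`). -/

open Complex

/-- Genus-2 theta function with characteristics. -/
noncomputable def theta2 (a b : Fin 2 → ℝ) (z : Fin 2 → ℂ)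
    (Ω : Matrix (Fin 2) (Fin 2) ℂ) : ℂ :=
  ∑' n : Fin 2 → ℤ,
    Complex.exp ((Real.pi : ℂ) * I *
        (∑ i, ∑ j, ((n i : ℂ) + (a i : ℂ)) * Ω i j * ((n j : ℂ) + (a j : ℂ)))
      + 2 * (Real.pi : ℂ) * I * (∑ i, ((n i : ℂ) + (a i : ℂ)) * (z i + (b i : ℂ))))

/-- The Siegel upper half space of degree 2. -/
def IsSiegel (Ω : Matrix (Fin 2) (Fin 2) ℂ) : Prop :=
  Ω.IsSymm ∧ (Matrix.of fun i j => (Ω i j).im).PosDef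

noncomputable def A₁ (Ω : Matrix (Fin 2) (Fin 2) ℂ) : ℂ := theta2 ![0, 0] ![0, 0] 0 Ω
noncomputable def A₂ (Ω : Matrix (Fin 2) (Fin 2) ℂ) : ℂ := theta2 ![0, 0] ![0, 1/2] 0 Ω
noncomputable def A₃ (Ω : Matrix (Fin 2) (Fin 2) ℂ) : ℂ := theta2 ![0, 0] ![1/2, 0] 0 Ω
noncomputable def A₄ (Ω : Matrix (Fin 2) (Fin 2) ℂ) : ℂ := theta2 ![0, 0] ![1/2, 1/2] 0 Ω
noncomputable def A₅ (Ω : Matrix (Fin 2) (Fin 2) ℂ) : ℂ := theta2 ![0, 1/2] ![0, 0] 0 Ω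
noncomputable def A₆ (Ω : Matrix (Fin 2) (Fin 2) ℂ) : ℂ := theta2 ![1/2, 0] ![0, 0] 0 Ω
noncomputable def A₇ (Ω : Matrix (Fin 2) (Fin 2) ℂ) : ℂ := theta2 ![1/2, 1/2] ![0, 0] 0 Ω
noncomputable def A₈ (Ω : Matrix (Fin 2) (Fin 2) ℂ) : ℂ := theta2 ![0, 1/2] ![1/2, 0] 0 Ω
noncomputable def A₉ (Ω : Matrix (Fin 2) (Fin 2) ℂ) : ℂ := theta2 ![1/2, 0] ![0, 1/2] 0 Ω
noncomputable def A₁₀ (Ω : Matrix (Fin 2) (Fin 2) ℂ) : ℂ := theta2 ![1/2, 1/2] ![1/2, 1/2] 0 Ω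

noncomputable def X₁ (z : Fin 2 → ℂ) (Ω : Matrix (Fin 2) (Fin 2) ℂ) : ℂ :=
  theta2 ![0, 1/2] ![0, 1/2] (fun i => 2 * z i) Ω
noncomputable def X₂ (z : Fin 2 → ℂ) (Ω : Matrix (Fin 2) (Fin 2) ℂ) : ℂ :=
  theta2 ![0, 1/2] ![1/2, 1/2] (fun i => 2 * z i) Ω
noncomputable def X₃ (z : Fin 2 → ℂ) (Ω : Matrix (Fin 2) (Fin 2) ℂ) : ℂ :=
  theta2 ![1/2, 1/2] ![0, 1/2] (fun i => 2 * z i) Ω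
noncomputable def X₄ (z : Fin 2 → ℂ) (Ω : Matrix (Fin 2) (Fin 2) ℂ) : ℂ :=
  theta2 ![1/2, 0] ![1/2, 0] (fun i => 2 * z i) Ω
noncomputable def X₅ (z : Fin 2 → ℂ) (Ω : Matrix (Fin 2) (Fin 2) ℂ) : ℂ :=
  theta2 ![1/2, 0] ![1/2, 1/2] (fun i => 2 * z i) Ω
noncomputable def X₆ (z : Fin 2 → ℂ) (Ω : Matrix (Fin 2) (Fin 2) ℂ) : ℂ :=
  theta2 ![1/2, 1/2] ![1/2, 0] (fun i => 2 * z i) Ω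

/-- The general term of the series defining `theta2`. -/
noncomputable def theta2Term (a b : Fin 2 → ℝ) (z : Fin 2 → ℂ)
    (Ω : Matrix (Fin 2) (Fin 2) ℂ) (n : Fin 2 → ℤ) : ℂ :=
  Complex.exp ((Real.pi : ℂ) * I *
        (∑ i, ∑ j, ((n i : ℂ) + (a i : ℂ)) * Ω i j * ((n j : ℂ) + (a j : ℂ)))
      + 2 * (Real.pi : ℂ) * I * (∑ i, ((n i : ℂ) + (a i : ℂ)) * (z i + (b i : ℂ))))

lemma theta2_eq (a b : Fin 2 → ℝ) (z : Fin 2 → ℂ) (Ω : Matrix (Fin 2) (Fin 2) ℂ) :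
    theta2 a b z Ω = ∑' n, theta2Term a b z Ω n := rfl

/-! ### Absolute convergence -/

lemma summable_exp_quadratic (c a v : ℝ) (hc : 0 < c) :
    Summable fun n : ℤ => Real.exp (-Real.pi * (c * (n + a) ^ 2 + 2 * (n + a) * v)) := by
  have h := ((summable_jacobiTheta₂_term_iff (((c * a + v : ℝ) : ℂ) * I) ((c : ℂ) * I)).2
    (by simpa using hc)).norm
  refine (h.mul_left (Real.exp (-Real.pi * (c * a ^ 2 + 2 * a * v)))).congr fun n => ?_
  rw [norm_jacobiTheta₂_term, ← Real.exp_add]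
  congr 1
  simp
  ring

lemma norm_theta2Term (a b : Fin 2 → ℝ) (z : Fin 2 → ℂ) (Ω : Matrix (Fin 2) (Fin 2) ℂ)
    (n : Fin 2 → ℤ) :
    ‖theta2Term a b z Ω n‖ = Real.exp (-Real.pi *
      ((∑ i, ∑ j, ((n i : ℝ) + a i) * (Ω i j).im * ((n j : ℝ) + a j))
        + 2 * ∑ i, ((n i : ℝ) + a i) * (z i).im)) := by
  rw [theta2Term, Complex.norm_exp]
  congr 1
  simp [Fin.sum_univ_two]
  ring

lemma IsSiegel.exists_le {Ω : Matrix (Fin 2) (Fin 2) ℂ} (h : IsSiegel Ω) :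
    ∃ c : ℝ, 0 < c ∧ ∀ x : Fin 2 → ℝ,
      c * (x 0 ^ 2 + x 1 ^ 2) ≤ ∑ i, ∑ j, x i * (Ω i j).im * x j := by
  obtain ⟨hs, hp⟩ := h
  have hd := hp.det_pos
  have h0 := hp.diag_pos (i := 0)
  have h1 := hp.diag_pos (i := 1)
  have h01 : Ω 1 0 = Ω 0 1 := hs.apply 0 1
  simp only [Matrix.det_fin_two, Matrix.of_apply, h01] at hd h0 h1
  simp only [Fin.sum_univ_two, h01]
  generalize (Ω 0 0).im = p at *
  generalize (Ω 0 1).im = q at *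
  generalize (Ω 1 1).im = r at *
  -- With this `c`, the form minus `c` times the identity has determinant `c ^ 2`.
  refine ⟨(p * r - q * q) / (p + r), by positivity, fun x => ?_⟩
  rw [div_mul_eq_mul_div, div_le_iff₀ (by positivity)]
  -- Multiplied by `p + r`, the difference is a sum of squares.
  nlinarith [sq_nonneg (p * x 0 + q * x 1), sq_nonneg (q * x 0 + r * x 1)]

lemma summable_theta2Term (a b : Fin 2 → ℝ) (z : Fin 2 → ℂ) {Ω : Matrix (Fin 2) (Fin 2) ℂ}
    (h : IsSiegel Ω) : Summable fun n => ‖theta2Term a b z Ω n‖ := by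
  obtain ⟨c, hc, hle⟩ := h.exists_le
  have hsum := (summable_exp_quadratic c (a 0) (z 0).im hc).mul_of_nonneg
    (summable_exp_quadratic c (a 1) (z 1).im hc)
    (fun _ => (Real.exp_pos _).le) (fun _ => (Real.exp_pos _).le)
  rw [← (finTwoArrowEquiv ℤ).summable_iff] at hsum
  refine Summable.of_nonneg_of_le (fun _ => norm_nonneg _) (fun n => ?_) hsum
  rw [norm_theta2Term]
  rw [Function.comp_apply, show finTwoArrowEquiv ℤ n = (n 0, n 1) from rfl,
    ← Real.exp_add, Real.exp_le_exp]
  have := mul_le_mul_of_nonneg_left (hle fun i => (n i : ℝ) + a i) Real.pi_pos.le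
  simp only [Fin.sum_univ_two] at this ⊢
  linarith

lemma IsSiegel.two_smul {Ω : Matrix (Fin 2) (Fin 2) ℂ} (h : IsSiegel Ω) :
    IsSiegel ((2 : ℂ) • Ω) := by
  refine ⟨h.1.smul 2, ?_⟩
  have := h.2.smul (show (0 : ℝ) < 2 by norm_num)
  convert this using 1
  ext i j
  simp

/-! ### Squares in terms of second-order theta functions -/

/-- Pairs of lattice points `(n, m)` are uniquely `(p + q + s, p - q)` with `s ∈ {0, 1}²`;
here `s` is the common parity of `n + m` and `n - m`. -/
noncomputable def latticePairEquiv :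
    (Fin 2 → Fin 2) × ((Fin 2 → ℤ) × (Fin 2 → ℤ)) ≃ (Fin 2 → ℤ) × (Fin 2 → ℤ) :=
  Equiv.ofBijective
    (fun x => (fun i => x.2.1 i + x.2.2 i + ((x.1 i : ℕ) : ℤ), fun i => x.2.1 i - x.2.2 i)) <| by
    constructor
    · rintro ⟨s, p, q⟩ ⟨s', p', q'⟩ h
      simp only [Prod.mk.injEq, funext_iff] at h
      obtain ⟨h1, h2⟩ := h
      refine Prod.ext (funext fun i => Fin.ext ?_)
        (Prod.ext (funext fun i => ?_) (funext fun i => ?_)) <;>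
      · have := h1 i
        have := h2 i
        have := (s i).isLt
        have := (s' i).isLt
        dsimp only
        omega
    · rintro ⟨n, m⟩
      refine ⟨(fun i => ⟨((n i + m i) % 2).toNat, by omega⟩, fun i => (n i + m i) / 2,
        fun i => (n i + m i) / 2 - m i), ?_⟩
      refine Prod.ext (funext fun i => ?_) (funext fun i => ?_) <;>
      · dsimp only
        omega

lemma latticePairEquiv_apply (s : Fin 2 → Fin 2) (p q : Fin 2 → ℤ) :
    latticePairEquiv (s, p, q) = (fun i => p i + q i + ((s i : ℕ) : ℤ), fun i => p i - q i) :=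
  rfl

lemma theta2Term_mul (a b : Fin 2 → ℝ) (z : Fin 2 → ℂ) (Ω : Matrix (Fin 2) (Fin 2) ℂ)
    (s : Fin 2 → Fin 2) (p q : Fin 2 → ℤ) :
    theta2Term a b z Ω (latticePairEquiv (s, p, q)).1 *
      theta2Term a b z Ω (latticePairEquiv (s, p, q)).2 =
    theta2Term (fun i => a i + (s i : ℕ) / 2) (fun i => 2 * b i) (fun i => 2 * z i)
        ((2 : ℂ) • Ω) p *
      theta2Term (fun i => (s i : ℕ) / 2) 0 0 ((2 : ℂ) • Ω) q := by
  simp only [theta2Term, latticePairEquiv_apply, ← Complex.exp_add]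
  congr 1
  simp only [Fin.sum_univ_two, Matrix.smul_apply, smul_eq_mul, Pi.zero_apply]
  push_cast
  ring

lemma theta2_sq (a b : Fin 2 → ℝ) (z : Fin 2 → ℂ) {Ω : Matrix (Fin 2) (Fin 2) ℂ}
    (h : IsSiegel Ω) :
    theta2 a b z Ω ^ 2 = ∑ s : Fin 2 → Fin 2,
      theta2 (fun i => a i + (s i : ℕ) / 2) (fun i => 2 * b i) (fun i => 2 * z i) ((2 : ℂ) • Ω) *
        theta2 (fun i => (s i : ℕ) / 2) 0 0 ((2 : ℂ) • Ω) := by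
  have hs := summable_theta2Term a b z h
  have hprod := summable_mul_of_summable_norm hs hs
  simp only [theta2_eq]
  rw [sq, tsum_mul_tsum_of_summable_norm hs hs, ← latticePairEquiv.tsum_eq]
  rw [← latticePairEquiv.summable_iff] at hprod
  have h2 := hprod.tsum_prod
  simp only [Function.comp_def] at h2
  rw [h2, tsum_fintype]
  refine Finset.sum_congr rfl fun s _ => ?_
  rw [tsum_mul_tsum_of_summable_norm (summable_theta2Term _ _ _ h.two_smul)
    (summable_theta2Term _ _ _ h.two_smul)]
  exact tsum_congr fun x => theta2Term_mul a b z Ω s x.1 x.2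

/-- Integral characteristics `k`, `l` change `θ[a; 0]` only by the factor `exp(2πi a·l)`. -/
lemma theta2_add_int (a : Fin 2 → ℝ) (k l : Fin 2 → ℤ) (z : Fin 2 → ℂ)
    (Ω : Matrix (Fin 2) (Fin 2) ℂ) :
    theta2 (fun i => a i + k i) (fun i => l i) z Ω =
      Complex.exp (2 * Real.pi * I * ∑ i, (a i : ℂ) * l i) * theta2 a 0 z Ω := by
  simp only [theta2_eq]
  rw [← tsum_mul_left, ← (Equiv.addRight k).tsum_eq (fun n => _ * theta2Term a 0 z Ω n)]
  refine tsum_congr fun n => ?_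
  -- The two exponents differ by `2πi` times the integer `(n + k) · l`.
  have hper := Complex.exp_int_mul_two_pi_mul_I (∑ i, (n i + k i) * l i)
  rw [← mul_one (_ * theta2Term a 0 z Ω _), ← hper]
  simp only [theta2Term, ← Complex.exp_add]
  congr 1
  simp only [Fin.sum_univ_two, Equiv.coe_addRight, Pi.add_apply, Pi.zero_apply]
  push_cast
  ring

/-- The second-order theta function `θ[(u/2, v/2); 0](2z, 2Ω)`. -/
noncomputable def secondTheta (z : Fin 2 → ℂ) (Ω : Matrix (Fin 2) (Fin 2) ℂ)
    (u v : Fin 2) : ℂ :=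
  theta2 (fun i => ((![u, v] i : Fin 2) : ℕ) / 2) 0 (fun i => 2 * z i) ((2 : ℂ) • Ω)

/-- Additions in `Fin 2` are modulo 2, so `α + u` in the characteristic and in the exponent of the
sign is already reduced; the carry shifts the characteristic by an integer. -/
lemma theta2_half_sq (α β : Fin 2 → Fin 2) (z : Fin 2 → ℂ) {Ω : Matrix (Fin 2) (Fin 2) ℂ}
    (h : IsSiegel Ω) :
    theta2 (fun i => (α i : ℕ) / 2) (fun i => (β i : ℕ) / 2) z Ω ^ 2 =
      ∑ u : Fin 2, ∑ v : Fin 2,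
        (-1) ^ (((α 0 + u : Fin 2) : ℕ) * (β 0 : ℕ) + ((α 1 + v : Fin 2) : ℕ) * (β 1 : ℕ)) *
          secondTheta z Ω (α 0 + u) (α 1 + v) * secondTheta 0 Ω u v := by
  rw [theta2_sq _ _ _ h, ← (finTwoArrowEquiv (Fin 2)).symm.sum_comp, Fintype.sum_prod_type]
  refine Finset.sum_congr rfl fun u _ => Finset.sum_congr rfl fun v _ => ?_
  have hcarry (x y : Fin 2) : ((x : ℕ) / 2 + (y : ℕ) / 2 : ℝ) =
      (((x + y : Fin 2) : ℕ) : ℝ) / 2 + (((x : ℕ) * (y : ℕ) : ℤ) : ℝ) := by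
    fin_cases x <;> fin_cases y <;> norm_num
  have key := theta2_add_int (fun i => ((![α 0 + u, α 1 + v] i : Fin 2) : ℕ) / 2)
    (fun i => (α i : ℕ) * ((![u, v] i : Fin 2) : ℕ)) (fun i => (β i : ℕ))
    (fun i => 2 * z i) ((2 : ℂ) • Ω)
  have hexp : Complex.exp (2 * Real.pi * I *
      ∑ i, (((((![α 0 + u, α 1 + v] i : Fin 2) : ℕ) / 2 : ℝ)) : ℂ) * (((β i : ℕ) : ℤ) : ℂ)) =
      (-1) ^ (((α 0 + u : Fin 2) : ℕ) * (β 0 : ℕ) + ((α 1 + v : Fin 2) : ℕ) * (β 1 : ℕ)) := by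
    rw [← Complex.exp_pi_mul_I, ← Complex.exp_nat_mul]
    congr 1
    simp only [Fin.sum_univ_two, Matrix.cons_val_zero, Matrix.cons_val_one]
    push_cast
    ring
  rw [hexp] at key
  have ht : secondTheta 0 Ω u v =
      theta2 (fun i => ((![u, v] i : Fin 2) : ℕ) / 2) 0 0 ((2 : ℂ) • Ω) := by
    rw [secondTheta]
    congr 1
    ext i
    simp
  rw [ht, secondTheta, ← key]
  congr 2
  · ext i
    rw [show (finTwoArrowEquiv (Fin 2)).symm (u, v) = ![u, v] from rfl, hcarry]
    fin_cases i <;> simp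
  · ext i
    push_cast
    ring

/-! ### The quadratic relations -/

/-- `theta2_half_sq` for characteristics given as explicit pairs of reals. -/
lemma theta2_pair_sq (α₀ α₁ β₀ β₁ : Fin 2) {a b : Fin 2 → ℝ} (z : Fin 2 → ℂ)
    {Ω : Matrix (Fin 2) (Fin 2) ℂ} (h : IsSiegel Ω)
    (ha : a = ![((α₀ : ℕ) : ℝ) / 2, ((α₁ : ℕ) : ℝ) / 2])
    (hb : b = ![((β₀ : ℕ) : ℝ) / 2, ((β₁ : ℕ) : ℝ) / 2]) :
    theta2 a b z Ω ^ 2 =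
      ∑ u : Fin 2, ∑ v : Fin 2,
        (-1) ^ (((α₀ + u : Fin 2) : ℕ) * (β₀ : ℕ) + ((α₁ + v : Fin 2) : ℕ) * (β₁ : ℕ)) *
          secondTheta z Ω (α₀ + u) (α₁ + v) * secondTheta 0 Ω u v := by
  have := theta2_half_sq ![α₀, α₁] ![β₀, β₁] z h
  simp only [Matrix.cons_val_zero, Matrix.cons_val_one] at this
  rw [← this]
  congr 2
  · rw [ha]; ext i; fin_cases i <;> simp
  · rw [hb]; ext i; fin_cases i <;> simp

theorem theta_relations_E13_E15
    (Ω : Matrix (Fin 2) (Fin 2) ℂ) (hΩ : IsSiegel Ω) (z : Fin 2 → ℂ) :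
    (A₇ Ω ^ 2 * X₂ z Ω ^ 2 - A₈ Ω ^ 2 * X₃ z Ω ^ 2 + A₂ Ω ^ 2 * X₄ z Ω ^ 2 - A₁ Ω ^ 2 * X₅ z Ω ^ 2 = 0) ∧
    (A₉ Ω ^ 2 * X₂ z Ω ^ 2 - A₄ Ω ^ 2 * X₃ z Ω ^ 2 - A₅ Ω ^ 2 * X₄ z Ω ^ 2 + A₁ Ω ^ 2 * X₆ z Ω ^ 2 = 0) ∧
    (A₆ Ω ^ 2 * X₂ z Ω ^ 2 - A₃ Ω ^ 2 * X₃ z Ω ^ 2 - A₅ Ω ^ 2 * X₅ z Ω ^ 2 + A₂ Ω ^ 2 * X₆ z Ω ^ 2 = 0) := by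
  rw [A₁, A₂, A₃, A₄, A₅, A₆, A₇, A₈, A₉, X₂, X₃, X₄, X₅, X₆,
    theta2_pair_sq 0 0 0 0 0 hΩ (a := ![0, 0]) (b := ![0, 0]) (by simp) (by simp),
    theta2_pair_sq 0 0 0 1 0 hΩ (a := ![0, 0]) (b := ![0, 1 / 2]) (by simp) (by simp),
    theta2_pair_sq 0 0 1 0 0 hΩ (a := ![0, 0]) (b := ![1 / 2, 0]) (by simp) (by simp),
    theta2_pair_sq 0 0 1 1 0 hΩ (a := ![0, 0]) (b := ![1 / 2, 1 / 2]) (by simp) (by simp),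
    theta2_pair_sq 0 1 0 0 0 hΩ (a := ![0, 1 / 2]) (b := ![0, 0]) (by simp) (by simp),
    theta2_pair_sq 1 0 0 0 0 hΩ (a := ![1 / 2, 0]) (b := ![0, 0]) (by simp) (by simp),
    theta2_pair_sq 1 1 0 0 0 hΩ (a := ![1 / 2, 1 / 2]) (b := ![0, 0]) (by simp) (by simp),
    theta2_pair_sq 0 1 1 0 0 hΩ (a := ![0, 1 / 2]) (b := ![1 / 2, 0]) (by simp) (by simp),
    theta2_pair_sq 1 0 0 1 0 hΩ (a := ![1 / 2, 0]) (b := ![0, 1 / 2]) (by simp) (by simp),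
    theta2_pair_sq 0 1 1 1 _ hΩ (a := ![0, 1 / 2]) (b := ![1 / 2, 1 / 2]) (by simp) (by simp),
    theta2_pair_sq 1 1 0 1 _ hΩ (a := ![1 / 2, 1 / 2]) (b := ![0, 1 / 2]) (by simp) (by simp),
    theta2_pair_sq 1 0 1 0 _ hΩ (a := ![1 / 2, 0]) (b := ![1 / 2, 0]) (by simp) (by simp),
    theta2_pair_sq 1 0 1 1 _ hΩ (a := ![1 / 2, 0]) (b := ![1 / 2, 1 / 2]) (by simp) (by simp),
    theta2_pair_sq 1 1 1 0 _ hΩ (a := ![1 / 2, 1 / 2]) (b := ![1 / 2, 0]) (by simp) (by simp)]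
  have h11 : (1 + 1 : Fin 2) = 0 := rfl
  simp only [Fin.sum_univ_two, h11, add_zero, zero_add, Fin.val_zero, Fin.val_one]
  refine ⟨?_, ?_, ?_⟩ <;> ring
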